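/- arXiv:1609.07295 — 2 statements merged into one kernel-verified Lean document; each statement's English description precedes it below -/
import Mathlib

section
/- The least positive integer k for which there exists a Borwein polynomial with exactly k nonzero coefficients that divides no Littlewood polynomial is k = 4. That is, every Borwein polynomial with at most 3 nonzero coefficients divides some Littlewood polynomial, and there exists a Borwein polynomial with exactly 4 nonzero coefficients (for instance X^4 + X^3 - X + 1) that divides no Littlewood polynomial. -/
open Polynomial

/-- A Borwein polynomial: all coefficients in {-1,0,1} and nonzero constant term. -/
def IsBorwein (P : Polynomial ℤ) : Prop :=
  (∀ i, P.coeff i ∈ ({-1, 0, 1} : Set ℤ)) ∧ P.coeff 0 ≠ 0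

/-- A Littlewood polynomial: all coefficients of X^0,...,X^(deg) lie in {-1,1}. -/
def IsLittlewood (L : Polynomial ℤ) : Prop :=
  ∀ i ≤ L.natDegree, L.coeff i ∈ ({-1, 1} : Set ℤ)

/-!
For at most three terms, reduce `P` modulo 2: since `X` is a unit of finite order modulo
`(X - 1) * P`, the reduction divides a geometric sum `1 + X + ⋯ + X ^ (N - 1)`. The cofactor lifts
to `Q` with coefficients in `{-1, 0, 1}` whose signs make the constant and the leading term of `P`
cancel whenever they meet in `P * Q`. The coefficients of `P * Q` are then at most 2 in absolute
value and odd, hence `±1`.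

For the quadrinomial, `X ^ 4 - X ^ 3 + X + 1` has a root `w` with `|w| > 1.36`, and `w⁻¹` is a root
of `X ^ 4 + X ^ 3 - X + 1`. If a Littlewood polynomial vanishes at `w⁻¹`, then the Horner iteration
`v ↦ w * v ± 1`, run on its coefficients from the constant one up, starts at `±1`, ends at `0`, and
so never leaves the disc of radius `1 / (|w| - 1) < 3`. But only finitely many elements of `ℤ[w]`
can be reached under that constraint, and none of them is `0`.
-/

theorem exists_dvd_X_pow_sub_one {K : Type*} [Field K] [Finite K] {p : K[X]}
    (hp : p.coeff 0 ≠ 0) : ∃ n, 0 < n ∧ p ∣ X ^ n - 1 := by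
  have hp0 : p ≠ 0 := by
    rintro rfl
    exact hp (coeff_zero 0)
  have : Module.Finite K (AdjoinRoot p) := (AdjoinRoot.powerBasis hp0).finite
  have : Finite (AdjoinRoot p) := Module.finite_of_finite K
  obtain ⟨u, v, huv⟩ : IsCoprime X p :=
    (prime_X.irreducible.coprime_iff_not_dvd).2 (mt X_dvd_iff.1 hp)
  have hroot : IsUnit (AdjoinRoot.root p) := by
    refine IsUnit.of_mul_eq_one_right (AdjoinRoot.mk p u) ?_
    have h := congrArg (AdjoinRoot.mk p) huv
    rwa [map_add, map_mul, map_mul, AdjoinRoot.mk_X, AdjoinRoot.mk_self, mul_zero, add_zero,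
      map_one] at h
  obtain ⟨n, hn, hpow⟩ := (isOfFinOrder_of_finite hroot.unit).exists_pow_eq_one
  refine ⟨n, hn, AdjoinRoot.mk_eq_zero.1 ?_⟩
  have hpow' : AdjoinRoot.root p ^ n = 1 := congrArg Units.val hpow
  rw [map_sub, map_pow, AdjoinRoot.mk_X, map_one, hpow', sub_self]

theorem exists_dvd_geom_sum {K : Type*} [Field K] [Finite K] {p : K[X]} (hp : p.coeff 0 ≠ 0) :
    ∃ n, 0 < n ∧ p ∣ ∑ i ∈ Finset.range n, X ^ i := by
  have hp' : (p * (X - 1)).coeff 0 ≠ 0 := by simpa [mul_coeff_zero] using hp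
  obtain ⟨n, hn, hdvd⟩ := exists_dvd_X_pow_sub_one hp'
  refine ⟨n, hn, ?_⟩
  rw [← geom_sum_mul] at hdvd
  exact (mul_dvd_mul_iff_right (X_sub_C_ne_zero (1 : K))).1 hdvd

theorem abs_coeff_mul_le_card_support {R : Type*} [CommRing R] [LinearOrder R]
    [IsStrictOrderedRing R] {P Q : R[X]} (hP : ∀ i, |P.coeff i| ≤ 1) (hQ : ∀ i, |Q.coeff i| ≤ 1)
    (n : ℕ) : |(P * Q).coeff n| ≤ P.support.card := by
  have hterm : ∀ i, |(C (P.coeff i) * X ^ i * Q).coeff n| ≤ 1 := by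
    intro i
    rw [mul_assoc, coeff_C_mul, coeff_X_pow_mul', abs_mul]
    refine mul_le_one₀ (hP i) (abs_nonneg _) ?_
    split_ifs
    · exact hQ _
    · simp
  calc |(P * Q).coeff n| = |∑ i ∈ P.support, (C (P.coeff i) * X ^ i * Q).coeff n| := by
        conv_lhs => rw [P.as_sum_support_C_mul_X_pow, Finset.sum_mul, finsetSum_coeff]
    _ ≤ ∑ i ∈ P.support, |(C (P.coeff i) * X ^ i * Q).coeff n| := Finset.abs_sum_le_sum_abs _ _
    _ ≤ P.support.card := by simpa using Finset.sum_le_card_nsmul _ _ 1 fun i _ => hterm i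

theorem odd_of_abs_le_one {c : ℤ} (hc : |c| ≤ 1) (hc0 : c ≠ 0) : Odd c := by
  rcases Int.abs_le_one_iff.1 hc with rfl | rfl | rfl
  · exact absurd rfl hc0
  · decide
  · decide

theorem IsLittlewood.of_map_eq_geom_sum {L : ℤ[X]} {n : ℕ}
    (hmap : L.map (Int.castRingHom (ZMod 2)) = ∑ i ∈ Finset.range n, X ^ i)
    (hodd : Odd L.leadingCoeff) (hbound : ∀ i, |L.coeff i| ≤ 2) : IsLittlewood L := by
  have hcoeff (i : ℕ) : Odd (L.coeff i) ↔ i < n := by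
    have h := congrArg (coeff · i) hmap
    simp only [coeff_map, eq_intCast, finsetSum_coeff, coeff_X_pow, Finset.sum_ite_eq,
      Finset.mem_range] at h
    rw [← ZMod.intCast_eq_one_iff_odd, h]
    simp
  intro i hi
  have hodd' : Odd (L.coeff i) := (hcoeff i).2 (hi.trans_lt ((hcoeff _).1 hodd))
  have := abs_le.1 (hbound i)
  rw [Set.mem_insert_iff, Set.mem_singleton_iff]
  obtain ⟨k, hk⟩ := hodd'
  omega

/-- The lift to `ℤ[X]` of a polynomial over `ZMod 2` in which the coefficient `1` of `X ^ n` becomes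
`σ ^ ⌊n / a⌋`; for `σ = ±1`, coefficients at distance `a` thus differ by the sign `σ`. -/
noncomputable def signedLift (σ : ℤ) (a : ℕ) (G : (ZMod 2)[X]) : ℤ[X] :=
  ∑ n ∈ G.support, C (σ ^ (n / a)) * X ^ n

theorem coeff_signedLift (σ : ℤ) (a : ℕ) (G : (ZMod 2)[X]) (n : ℕ) :
    (signedLift σ a G).coeff n = if n ∈ G.support then σ ^ (n / a) else 0 := by
  simp only [signedLift, finsetSum_coeff, coeff_C_mul_X_pow, Finset.sum_ite_eq]

theorem abs_coeff_signedLift_le_one {σ : ℤ} (hσ : |σ| = 1) (a : ℕ) (G : (ZMod 2)[X]) (n : ℕ) :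
    |(signedLift σ a G).coeff n| ≤ 1 := by
  rw [coeff_signedLift]
  split_ifs
  · rw [abs_pow, hσ, one_pow]
  · simp

theorem map_signedLift {σ : ℤ} (hσ : |σ| = 1) (a : ℕ) (G : (ZMod 2)[X]) :
    (signedLift σ a G).map (Int.castRingHom (ZMod 2)) = G := by
  ext n
  rw [coeff_map, eq_intCast, coeff_signedLift]
  split_ifs with hn
  · have hσn : Odd (σ ^ (n / a)) := .pow (odd_of_abs_le_one hσ.le (by rintro rfl; simp at hσ))
    rw [ZMod.intCast_eq_one_iff_odd.2 hσn]
    exact (Fin.eq_one_of_ne_zero _ (mem_support_iff.1 hn)).symm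
  · rw [Int.cast_zero, notMem_support_iff.1 hn]

theorem abs_coeff_binomial_mul_signedLift_le_one {x y : ℤ} (hx : |x| = 1) (hy : |y| = 1) {a : ℕ}
    (ha : 0 < a) (G : (ZMod 2)[X]) (n : ℕ) :
    |((C x + C y * X ^ a) * signedLift (-x * y) a G).coeff n| ≤ 1 := by
  have hσ : |-x * y| = 1 := by rw [abs_mul, abs_neg, hx, hy, one_mul]
  have hunit {z : ℤ} (hz : |z| = 1) (m : ℕ) : |z * (-x * y) ^ m| = 1 := by
    rw [abs_mul, abs_pow, hz, hσ, one_pow, one_mul]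
  rw [add_mul, coeff_add, mul_assoc, coeff_C_mul, coeff_C_mul, coeff_X_pow_mul']
  split_ifs with han
  · obtain ⟨m, rfl⟩ := Nat.exists_eq_add_of_le' han
    have hcancel : x * (-x * y) ^ (m / a + 1) + y * (-x * y) ^ (m / a) = 0 := by
      have hxx : x * x = 1 := by rw [← abs_mul_abs_self, hx, one_mul]
      linear_combination -y * (-x * y) ^ (m / a) * hxx
    rw [Nat.add_sub_cancel, coeff_signedLift, coeff_signedLift, Nat.add_div_right _ ha]
    split_ifs
    · rw [hcancel, abs_zero]; exact zero_le_one
    · rw [mul_zero, add_zero, hunit hx]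
    · rw [mul_zero, zero_add, hunit hy]
    · simp
  · rw [mul_zero, add_zero, abs_mul, hx, one_mul]
    exact abs_coeff_signedLift_le_one hσ a G n

namespace IsBorwein

theorem abs_coeff_le_one {P : ℤ[X]} (hP : IsBorwein P) (i : ℕ) : |P.coeff i| ≤ 1 := by
  rcases hP.1 i with h | h | h
  all_goals rw [h]; decide

theorem abs_coeff_eq_one {P : ℤ[X]} (hP : IsBorwein P) {i : ℕ} (hi : P.coeff i ≠ 0) :
    |P.coeff i| = 1 :=
  (hP.abs_coeff_le_one i).antisymm (Int.one_le_abs hi)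

theorem odd_coeff {P : ℤ[X]} (hP : IsBorwein P) {i : ℕ} (hi : P.coeff i ≠ 0) :
    Odd (P.coeff i) :=
  odd_of_abs_le_one (hP.abs_coeff_le_one i) hi

theorem leadingCoeff_ne_zero {P : ℤ[X]} (hP : IsBorwein P) : P.leadingCoeff ≠ 0 :=
  Polynomial.leadingCoeff_ne_zero.2 (by rintro rfl; exact hP.2 (coeff_zero 0))

theorem isLittlewood_of_natDegree_eq_zero {P : ℤ[X]} (hP : IsBorwein P) (hdeg : P.natDegree = 0) :
    IsLittlewood P := by
  intro i hi
  obtain rfl : i = 0 := by omega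
  rcases hP.1 0 with h | h | h
  · exact Or.inl h
  · exact absurd h hP.2
  · exact Or.inr h

theorem exists_eq_binomial_add {P : ℤ[X]} (hP : IsBorwein P) (hdeg : P.natDegree ≠ 0) :
    ∃ R : ℤ[X], P = C (P.coeff 0) + C P.leadingCoeff * X ^ P.natDegree + R ∧
      (∀ i, |R.coeff i| ≤ 1) ∧ R.support.card + 2 = P.support.card := by
  have hcoeff : P.eraseLead.coeff 0 = P.coeff 0 := eraseLead_coeff_of_ne 0 (Ne.symm hdeg)
  refine ⟨P.eraseLead.erase 0, ?_, fun i => ?_, ?_⟩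
  · conv_lhs => rw [← P.eraseLead_add_C_mul_X_pow, ← monomial_add_erase P.eraseLead 0, hcoeff,
      monomial_zero_left]
    ring
  · rw [coeff_erase, eraseLead_coeff]
    split_ifs
    · simp
    · simp
    · exact hP.abs_coeff_le_one i
  · have hmem : 0 ∈ P.eraseLead.support := mem_support_iff.2 (by rw [hcoeff]; exact hP.2)
    have := card_support_eraseLead_add_one
      (Polynomial.leadingCoeff_ne_zero.1 hP.leadingCoeff_ne_zero)
    have := Finset.card_erase_add_one hmem
    rw [support_erase]
    omega

theorem exists_lift_abs_coeff_mul_le {P : ℤ[X]} (hP : IsBorwein P) (hdeg : P.natDegree ≠ 0)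
    (G : (ZMod 2)[X]) : ∃ Q : ℤ[X], Q.map (Int.castRingHom (ZMod 2)) = G ∧
      (∀ i, |Q.coeff i| ≤ 1) ∧ ∀ i, |(P * Q).coeff i| ≤ P.support.card - 1 := by
  have h0 : |P.coeff 0| = 1 := hP.abs_coeff_eq_one hP.2
  have hlead : |P.leadingCoeff| = 1 := hP.abs_coeff_eq_one hP.leadingCoeff_ne_zero
  have hσ : |-P.coeff 0 * P.leadingCoeff| = 1 := by rw [abs_mul, abs_neg, h0, hlead, one_mul]
  obtain ⟨R, hsplit, hR, hcard⟩ := hP.exists_eq_binomial_add hdeg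
  set B : ℤ[X] := C (P.coeff 0) + C P.leadingCoeff * X ^ P.natDegree
  set Q := signedLift (-P.coeff 0 * P.leadingCoeff) P.natDegree G
  have hQ : ∀ i, |Q.coeff i| ≤ 1 := abs_coeff_signedLift_le_one hσ _ G
  refine ⟨Q, map_signedLift hσ _ G, hQ, fun i => ?_⟩
  calc |(P * Q).coeff i| = |(B * Q).coeff i + (R * Q).coeff i| := by
        rw [← coeff_add, ← add_mul, ← hsplit]
    _ ≤ 1 + R.support.card := (abs_add_le _ _).trans (add_le_add
        (abs_coeff_binomial_mul_signedLift_le_one h0 hlead (Nat.pos_of_ne_zero hdeg) G i)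
        (abs_coeff_mul_le_card_support hR hQ i))
    _ = P.support.card - 1 := by omega

theorem exists_isLittlewood_dvd {P : ℤ[X]} (hP : IsBorwein P) (hcard : P.support.card ≤ 3) :
    ∃ L : ℤ[X], IsLittlewood L ∧ P ∣ L := by
  by_cases hdeg : P.natDegree = 0
  · exact ⟨P, hP.isLittlewood_of_natDegree_eq_zero hdeg, dvd_rfl⟩
  have hmod : (P.map (Int.castRingHom (ZMod 2))).coeff 0 ≠ 0 := by
    rw [coeff_map, eq_intCast, ZMod.intCast_eq_one_iff_odd.2 (hP.odd_coeff hP.2)]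
    exact one_ne_zero
  obtain ⟨N, hN, G, hG⟩ := exists_dvd_geom_sum hmod
  obtain ⟨Q, rfl, hQ, hPQ⟩ := hP.exists_lift_abs_coeff_mul_le hdeg G
  rw [← Polynomial.map_mul] at hG
  have hQlead : Q.leadingCoeff ≠ 0 := by
    refine Polynomial.leadingCoeff_ne_zero.2 ?_
    rintro rfl
    have h := congrArg (coeff · 0) hG
    simp [coeff_X_pow, hN] at h
  refine ⟨P * Q, .of_map_eq_geom_sum hG.symm ?_ fun i => ?_, dvd_mul_right P Q⟩
  · rw [leadingCoeff_mul]
    exact (hP.odd_coeff hP.leadingCoeff_ne_zero).mul (odd_of_abs_le_one (hQ _) hQlead)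
  · have := hPQ i
    omega

end IsBorwein

theorem exists_root_norm_sub_mul_le {K : Type*} [NormedField K] {f : K[X]} (hf : f.Splits)
    (hdeg : f.natDegree ≠ 0) (z : K) :
    ∃ w ∈ f.roots, ‖z - w‖ * ‖f.derivative.eval z‖ ≤ f.natDegree * ‖f.eval z‖ := by
  classical
  have hf0 : f ≠ 0 := ne_zero_of_natDegree_gt (Nat.pos_of_ne_zero hdeg)
  by_cases hz : f.eval z = 0
  · exact ⟨z, (mem_roots hf0).2 hz, by simp [hz]⟩
  have hroots : f.roots.toFinset.Nonempty := by
    rw [Multiset.toFinset_nonempty]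
    exact hf.roots_ne_zero hdeg
  obtain ⟨w, hw, hmin⟩ := f.roots.toFinset.exists_min_image (‖z - ·‖) hroots
  rw [Multiset.mem_toFinset] at hw
  have hpos : 0 < ‖z - w‖ := by
    rw [norm_pos_iff, sub_ne_zero]
    rintro rfl
    exact hz (isRoot_of_mem_roots hw)
  have hsum : ‖(f.roots.map fun r => 1 / (z - r)).sum‖ ≤ f.natDegree / ‖z - w‖ :=
    calc ‖(f.roots.map fun r => 1 / (z - r)).sum‖
        ≤ ((f.roots.map fun r => 1 / (z - r)).map norm).sum := norm_multiset_sum_le _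
      _ ≤ f.roots.card • (1 / ‖z - w‖) := by
          refine (Multiset.sum_le_card_nsmul _ (1 / ‖z - w‖) ?_).trans_eq (by simp)
          simp only [Multiset.map_map, Multiset.mem_map, Function.comp_apply, norm_div, norm_one]
          rintro _ ⟨r, hr, rfl⟩
          exact one_div_le_one_div_of_le hpos (hmin r (Multiset.mem_toFinset.2 hr))
      _ ≤ f.natDegree / ‖z - w‖ := by
          rw [nsmul_eq_mul, mul_one_div]
          gcongr
          exact f.card_roots'
  refine ⟨w, hw, ?_⟩
  rw [hf.eval_derivative_eq_eval_mul_sum hz, norm_mul]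
  calc ‖z - w‖ * (‖f.eval z‖ * ‖(f.roots.map fun r => 1 / (z - r)).sum‖)
      ≤ ‖z - w‖ * (‖f.eval z‖ * (f.natDegree / ‖z - w‖)) := by gcongr
    _ = f.natDegree * ‖f.eval z‖ := by field_simp

/-- The successive values `c 0`, `c 0 * w + c 1`, `c 0 * w ^ 2 + c 1 * w + c 2`, … in Horner's
evaluation at `w` of the polynomial whose coefficients, from the leading one down, are `c`. -/
def hornerValue {R : Type*} [CommRing R] (w : R) (c : ℕ → R) : ℕ → R
  | 0 => c 0
  | n + 1 => w * hornerValue w c n + c (n + 1)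

theorem hornerValue_eq_pow_mul_sum {K : Type*} [Field K] {w : K} (hw : w ≠ 0) (c : ℕ → K) (n : ℕ) :
    hornerValue w c n = w ^ n * ∑ i ∈ Finset.range (n + 1), c i * w⁻¹ ^ i := by
  induction n with
  | zero => simp [hornerValue]
  | succ n ih =>
    rw [hornerValue, ih, Finset.sum_range_succ _ (n + 1), inv_pow]
    field_simp
    ring

theorem norm_hornerValue_le {K : Type*} [NormedField K] {w : K} (hw : 1 < ‖w‖) {c : ℕ → K} {N : ℕ}
    (hc : ∀ n ≤ N, ‖c n‖ ≤ 1) (hN : hornerValue w c N = 0) {n : ℕ} (hn : n ≤ N) :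
    ‖hornerValue w c n‖ ≤ 1 / (‖w‖ - 1) := by
  have hw' : 0 < ‖w‖ - 1 := sub_pos.2 hw
  induction hn using Nat.decreasingInduction with
  | self => rw [hN, norm_zero]; positivity
  | of_succ n hn ih =>
    have hstep : ‖w‖ * ‖hornerValue w c n‖ ≤ ‖w‖ * (1 / (‖w‖ - 1)) :=
      calc ‖w‖ * ‖hornerValue w c n‖ = ‖hornerValue w c (n + 1) - c (n + 1)‖ := by
            rw [hornerValue, add_sub_cancel_right, norm_mul]
        _ ≤ 1 / (‖w‖ - 1) + 1 := (norm_sub_le _ _).trans (add_le_add ih (hc _ hn))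
        _ = ‖w‖ * (1 / (‖w‖ - 1)) := by field_simp; ring
    exact le_of_mul_le_mul_left hstep (zero_lt_one.trans hw)

theorem hornerValue_coeff_natDegree {K : Type*} [Field K] {w : K} (hw : w ≠ 0) (L : ℤ[X]) :
    hornerValue w (fun n => (L.coeff n : K)) L.natDegree = w ^ L.natDegree * aeval w⁻¹ L := by
  simp only [hornerValue_eq_pow_mul_sum hw, aeval_eq_sum_range, zsmul_eq_mul]

/-- The binary cubic form `s₀ y³ + s₁ x y² + s₂ x² y + s₃ x³`; at `y = 1` it is the element of
`ℤ[x]` with coordinate vector `s`. The homogeneous form is there to clear denominators from `x`. -/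
def cubicForm {R : Type*} [CommRing R] (s : Fin 4 → ℤ) (x y : R) : R :=
  s 0 * y ^ 3 + s 1 * x * y ^ 2 + s 2 * x ^ 2 * y + s 3 * x ^ 3

theorem map_cubicForm {R S : Type*} [CommRing R] [CommRing S] (f : R →+* S) (s : Fin 4 → ℤ)
    (x y : R) : f (cubicForm s x y) = cubicForm s (f x) (f y) := by
  simp only [cubicForm, map_add, map_mul, map_pow, map_intCast]

theorem cubicForm_div_one {K : Type*} [Field K] (s : Fin 4 → ℤ) (x : K) {y : K} (hy : y ≠ 0) :
    cubicForm s (x / y) 1 = cubicForm s x y / y ^ 3 := by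
  simp only [cubicForm]
  field_simp

theorem norm_cubicForm_sub_le {K : Type*} [NormedField K] {s : Fin 4 → ℤ} {M r : ℝ}
    (hs : ∀ i, ‖(s i : K)‖ ≤ M) {x z : K} (hx : ‖x‖ ≤ r) (hz : ‖z‖ ≤ r) :
    ‖cubicForm s x 1 - cubicForm s z 1‖ ≤ M * (1 + 2 * r + 3 * r ^ 2) * ‖x - z‖ := by
  have hM : 0 ≤ M := (norm_nonneg _).trans (hs 0)
  have hr : 0 ≤ r := (norm_nonneg x).trans hx
  have hfactor : cubicForm s x 1 - cubicForm s z 1 =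
      (s 1 + s 2 * (x + z) + s 3 * (x ^ 2 + x * z + z ^ 2)) * (x - z) := by
    simp only [cubicForm]
    ring
  have hadd : ‖x + z‖ ≤ 2 * r := by
    linarith [norm_add_le x z]
  have hquad : ‖x ^ 2 + x * z + z ^ 2‖ ≤ 3 * r ^ 2 :=
    calc ‖x ^ 2 + x * z + z ^ 2‖ ≤ ‖x‖ ^ 2 + ‖x‖ * ‖z‖ + ‖z‖ ^ 2 :=
          norm_add₃_le.trans_eq (by rw [norm_pow, norm_mul, norm_pow])
      _ ≤ r ^ 2 + r * r + r ^ 2 := by gcongr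
      _ = 3 * r ^ 2 := by ring
  rw [hfactor, norm_mul]
  gcongr
  calc ‖(s 1 : K) + s 2 * (x + z) + s 3 * (x ^ 2 + x * z + z ^ 2)‖
      ≤ ‖(s 1 : K)‖ + ‖(s 2 : K)‖ * ‖x + z‖ + ‖(s 3 : K)‖ * ‖x ^ 2 + x * z + z ^ 2‖ :=
        norm_add₃_le.trans_eq (by rw [norm_mul, norm_mul])
    _ ≤ M + M * (2 * r) + M * (3 * r ^ 2) := by
        gcongr
        exacts [hs 1, hs 2, hs 3]
    _ = M * (1 + 2 * r + 3 * r ^ 2) := by ring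

/-- Coordinates of `w * v + e` in the basis `1, w, w², w³`, where `w ^ 4 = w ^ 3 - w - 1` and `s` is
the coordinate vector of `v`. -/
def hornerStep (e : ℤ) (s : Fin 4 → ℤ) : Fin 4 → ℤ :=
  ![e - s 3, s 0 - s 3, s 1, s 2 + s 3]

theorem cubicForm_hornerStep {R : Type*} [CommRing R] {w : R} (hw : w ^ 4 - w ^ 3 + w + 1 = 0)
    (e : ℤ) (s : Fin 4 → ℤ) : cubicForm (hornerStep e s) w 1 = w * cubicForm s w 1 + e := by
  simp only [cubicForm, hornerStep, Matrix.cons_val]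
  push_cast
  linear_combination -(s 3 : R) * hw

/-- `1000` times an approximation of the root of `X ^ 4 - X ^ 3 + X + 1` in the upper right
quadrant. -/
def approxRoot : GaussianInt := ⟨1066, 864⟩

theorem normSq_approxRoot_div : Complex.normSq ((approxRoot : ℂ) / 1000) = 1.882852 := by
  rw [approxRoot, GaussianInt.toComplex_def₂]
  simp [Complex.normSq_apply]
  norm_num

theorem exists_root_norm_sub_approxRoot_le :
    ∃ w : ℂ, w ^ 4 - w ^ 3 + w + 1 = 0 ∧ ‖w - (approxRoot : ℂ) / 1000‖ ≤ 1 / 100 := by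
  set z : ℂ := (approxRoot : ℂ) / 1000 with hz
  have hzeq : z = ⟨1.066, 0.864⟩ := by
    rw [hz, approxRoot, GaussianInt.toComplex_def₂]
    apply Complex.ext <;> norm_num
  set f : ℂ[X] := X ^ 4 - X ^ 3 + X + 1 with hf
  have hdeg : f.natDegree = 4 := by rw [hf]; compute_degree!
  have heval (w : ℂ) : f.eval w = w ^ 4 - w ^ 3 + w + 1 := by simp [hf]
  have hderiv : f.derivative.eval z = 4 * z ^ 3 - 3 * z ^ 2 + 1 := by
    simp [hf]; norm_num
  have hsmall : ‖f.eval z‖ ≤ 1 / 100 := by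
    rw [← sq_le_sq₀ (norm_nonneg _) (by norm_num), ← Complex.normSq_eq_norm_sq, heval, hzeq]
    norm_num [Complex.normSq_apply, pow_succ]
  have hlarge : 4 ≤ ‖f.derivative.eval z‖ := by
    rw [← sq_le_sq₀ (by norm_num) (norm_nonneg _), ← Complex.normSq_eq_norm_sq, hderiv, hzeq]
    norm_num [Complex.normSq_apply, pow_succ]
  obtain ⟨w, hw, hle⟩ := exists_root_norm_sub_mul_le (IsAlgClosed.splits f) (by omega) z
  refine ⟨w, (heval w).symm.trans (isRoot_of_mem_roots hw), ?_⟩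
  rw [hdeg] at hle
  push_cast at hle
  rw [norm_sub_rev]
  nlinarith [norm_nonneg (z - w)]

/-- `10 ^ 18 * |v| ^ 2`, an integer, for the value `v` at the approximate root of the polynomial
with coefficient vector `s`. -/
def scaledNorm (s : Fin 4 → ℤ) : ℤ :=
  (cubicForm s approxRoot 1000).norm

theorem scaledNorm_eq (s : Fin 4 → ℤ) :
    (scaledNorm s : ℝ) = 10 ^ 18 * ‖cubicForm s ((approxRoot : ℂ) / 1000) 1‖ ^ 2 := by
  have hmap : ((cubicForm s approxRoot 1000 : GaussianInt) : ℂ) =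
      cubicForm s (approxRoot : ℂ) 1000 := by
    rw [map_cubicForm, map_ofNat]
  rw [scaledNorm, GaussianInt.intCast_real_norm, Complex.normSq_eq_norm_sq, hmap,
    cubicForm_div_one s _ (by norm_num), norm_div, norm_pow, Complex.norm_ofNat]
  ring

theorem norm_mem_Icc_of_norm_sub_approxRoot_le {w : ℂ}
    (hw : ‖w - (approxRoot : ℂ) / 1000‖ ≤ 1 / 100) : ‖w‖ ∈ Set.Icc (34 / 25 : ℝ) (7 / 5) := by
  have hsq := normSq_approxRoot_div
  rw [Complex.normSq_eq_norm_sq] at hsq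
  have hdist := abs_le.1 ((abs_norm_sub_norm_le w ((approxRoot : ℂ) / 1000)).trans hw)
  constructor <;> nlinarith [norm_nonneg ((approxRoot : ℂ) / 1000)]

theorem lt_norm_cubicForm_of_lt_scaledNorm {w : ℂ}
    (hw : ‖w - (approxRoot : ℂ) / 1000‖ ≤ 1 / 100) {s : Fin 4 → ℤ} (hs : ∀ i, |s i| ≤ 2) {r : ℝ}
    (h : 10 ^ 18 * (r + 1 / 5) ^ 2 < scaledNorm s) : r < ‖cubicForm s w 1‖ := by
  set z : ℂ := (approxRoot : ℂ) / 1000 with hz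
  have hwz : ‖w‖ ≤ 7 / 5 := (norm_mem_Icc_of_norm_sub_approxRoot_le hw).2
  have hzz : ‖z‖ ≤ 7 / 5 := (norm_mem_Icc_of_norm_sub_approxRoot_le (by simp [hz])).2
  have hs' (i : Fin 4) : ‖(s i : ℂ)‖ ≤ 2 := by
    rw [Complex.norm_intCast]
    exact_mod_cast hs i
  have herror : ‖cubicForm s w 1 - cubicForm s z 1‖ ≤ 1 / 5 := by
    linarith [norm_cubicForm_sub_le hs' hwz hzz]
  have hlarge : r + 1 / 5 < ‖cubicForm s z 1‖ := by
    rw [scaledNorm_eq] at h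
    exact lt_of_pow_lt_pow_left₀ 2 (norm_nonneg _) (lt_of_mul_lt_mul_left h (by positivity))
  linarith [norm_sub_norm_le (cubicForm s z 1) (cubicForm s w 1),
    norm_sub_rev (cubicForm s z 1) (cubicForm s w 1)]

/-- One vector from each pair `±s` in `smallStates`. -/
def smallStatesUpToSign : List (Fin 4 → ℤ) :=
  [![0, 0, 0, 1], ![0, 0, 1, 0], ![0, 0, 2, -1], ![0, 1, 0, -1], ![0, 1, 1, -1],
   ![0, 2, -1, 0], ![1, -2, 0, 1], ![1, -1, -1, 0], ![1, -1, -1, 1], ![1, -1, 0, 0],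
   ![1, -1, 1, -1], ![1, -1, 1, 0], ![1, 0, -2, 1], ![1, 0, 0, 0], ![1, 0, 0, 1],
   ![1, 1, -1, 0], ![1, 1, -1, 1], ![1, 1, 0, 0], ![2, 0, -1, 0], ![2, 0, 0, 1]]

/-- The coordinate vectors of the Horner values that can be reached from `±1` by steps
`v ↦ w * v ± 1` which never leave the disc of radius `3`. -/
def smallStates : List (Fin 4 → ℤ) :=
  smallStatesUpToSign ++ smallStatesUpToSign.map (-·)

theorem hornerStep_mem_smallStates_or_lt_scaledNorm : ∀ s ∈ smallStates, ∀ e ∈ ({-1, 1} : Finset ℤ),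
    hornerStep e s ∈ smallStates ∨
      (∀ i, |hornerStep e s i| ≤ 2) ∧ 10 ^ 18 * 9 < scaledNorm (hornerStep e s) := by
  decide +kernel

theorem abs_le_two_and_lt_scaledNorm_of_mem_smallStates : ∀ s ∈ smallStates,
    (∀ i, |s i| ≤ 2) ∧ 10 ^ 18 < 25 * scaledNorm s := by
  decide +kernel

theorem cubicForm_ne_zero_of_mem_smallStates {w : ℂ}
    (hw : ‖w - (approxRoot : ℂ) / 1000‖ ≤ 1 / 100) {s : Fin 4 → ℤ} (hs : s ∈ smallStates) :
    cubicForm s w 1 ≠ 0 := by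
  obtain ⟨hbox, hlt⟩ := abs_le_two_and_lt_scaledNorm_of_mem_smallStates s hs
  have hlt' : (10 ^ 18 : ℝ) < 25 * scaledNorm s := by exact_mod_cast hlt
  exact norm_pos_iff.1 (lt_norm_cubicForm_of_lt_scaledNorm hw hbox (by linarith))

theorem hornerStep_mem_smallStates {w : ℂ} (hw : ‖w - (approxRoot : ℂ) / 1000‖ ≤ 1 / 100)
    {s : Fin 4 → ℤ} (hs : s ∈ smallStates) {e : ℤ} (he : e ∈ ({-1, 1} : Set ℤ))
    (hsmall : ‖cubicForm (hornerStep e s) w 1‖ ≤ 14 / 5) : hornerStep e s ∈ smallStates := by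
  refine (hornerStep_mem_smallStates_or_lt_scaledNorm s hs e (by simpa using he)).resolve_right ?_
  rintro ⟨hbox, hlt⟩
  have hlt' : (10 ^ 18 * 9 : ℝ) < scaledNorm (hornerStep e s) := by exact_mod_cast hlt
  exact hsmall.not_gt (lt_norm_cubicForm_of_lt_scaledNorm hw hbox (by linarith))

theorem exists_mem_smallStates_hornerValue_eq {w : ℂ} (hroot : w ^ 4 - w ^ 3 + w + 1 = 0)
    (hw : ‖w - (approxRoot : ℂ) / 1000‖ ≤ 1 / 100) {c : ℕ → ℤ} {N : ℕ}
    (hc : ∀ n ≤ N, c n ∈ ({-1, 1} : Set ℤ))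
    (hsmall : ∀ n ≤ N, ‖hornerValue w (fun n => (c n : ℂ)) n‖ ≤ 14 / 5) :
    ∀ n ≤ N, ∃ s ∈ smallStates, hornerValue w (fun n => (c n : ℂ)) n = cubicForm s w 1 := by
  intro n hn
  induction n with
  | zero =>
    refine ⟨![c 0, 0, 0, 0], ?_, by simp [hornerValue, cubicForm]⟩
    rcases hc 0 hn with h | h <;> rw [h] <;> decide
  | succ n ih =>
    obtain ⟨s, hs, hval⟩ := ih (by omega)
    have hstep : hornerValue w (fun n => (c n : ℂ)) (n + 1) =
        cubicForm (hornerStep (c (n + 1)) s) w 1 := by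
      rw [hornerValue, hval, cubicForm_hornerStep hroot]
    exact ⟨_, hornerStep_mem_smallStates hw hs (hc _ hn) (hstep ▸ hsmall _ hn), hstep⟩

theorem IsLittlewood.aeval_inv_ne_zero {L : ℤ[X]} (hL : IsLittlewood L) {w : ℂ}
    (hroot : w ^ 4 - w ^ 3 + w + 1 = 0) (hw : ‖w - (approxRoot : ℂ) / 1000‖ ≤ 1 / 100) :
    aeval w⁻¹ L ≠ 0 := by
  intro hzero
  have hnorm : 34 / 25 ≤ ‖w‖ := (norm_mem_Icc_of_norm_sub_approxRoot_le hw).1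
  have hw0 : w ≠ 0 := norm_pos_iff.1 (by linarith)
  have hend : hornerValue w (fun n => (L.coeff n : ℂ)) L.natDegree = 0 := by
    rw [hornerValue_coeff_natDegree hw0, hzero, mul_zero]
  have hcoeff : ∀ n ≤ L.natDegree, ‖(L.coeff n : ℂ)‖ ≤ 1 := by
    intro n hn
    rcases hL n hn with h | h <;> rw [h] <;> simp
  have hsmall : ∀ n ≤ L.natDegree, ‖hornerValue w (fun n => (L.coeff n : ℂ)) n‖ ≤ 14 / 5 := by
    intro n hn
    calc ‖hornerValue w (fun n => (L.coeff n : ℂ)) n‖ ≤ 1 / (‖w‖ - 1) :=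
          norm_hornerValue_le (by linarith) hcoeff hend hn
      _ ≤ 1 / (34 / 25 - 1) := by gcongr
      _ ≤ 14 / 5 := by norm_num
  obtain ⟨s, hs, hval⟩ := exists_mem_smallStates_hornerValue_eq hroot hw hL hsmall _ le_rfl
  exact cubicForm_ne_zero_of_mem_smallStates hw hs (hval.symm.trans hend)

theorem IsLittlewood.not_quadrinomial_dvd {L : ℤ[X]} (hL : IsLittlewood L) :
    ¬ X ^ 4 + X ^ 3 - X + 1 ∣ L := by
  intro hdvd
  obtain ⟨w, hroot, hw⟩ := exists_root_norm_sub_approxRoot_le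
  have hw0 : w ≠ 0 := by
    rintro rfl
    norm_num at hroot
  have hroot' : aeval w⁻¹ (X ^ 4 + X ^ 3 - X + 1 : ℤ[X]) = 0 := by
    simp only [map_add, map_sub, map_pow, aeval_X, map_one]
    field_simp
    linear_combination hroot
  exact hL.aeval_inv_ne_zero hroot hw (aeval_eq_zero_of_dvd_aeval_eq_zero hdvd hroot')

theorem support_quadrinomial : (X ^ 4 + X ^ 3 - X + 1 : ℤ[X]).support = {0, 1, 3, 4} := by
  ext n
  simp only [mem_support_iff, coeff_add, coeff_sub, coeff_X_pow, coeff_X, coeff_one,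
    Finset.mem_insert, Finset.mem_singleton]
  split_ifs <;> omega

theorem isBorwein_quadrinomial : IsBorwein (X ^ 4 + X ^ 3 - X + 1) := by
  refine ⟨fun n => ?_, by simp⟩
  simp only [coeff_add, coeff_sub, coeff_X_pow, coeff_X, coeff_one, Set.mem_insert_iff,
    Set.mem_singleton_iff]
  split_ifs <;> omega

/-- The least positive integer `k` for which there exists a Borwein polynomial with
exactly `k` nonzero coefficients dividing no Littlewood polynomial is `k = 4`;
moreover `X^4 + X^3 - X + 1` is such a polynomial with exactly 4 nonzero
coefficients. -/
theorem least_nonzero_terms_no_littlewood :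
    IsLeast {k : ℕ | 0 < k ∧ ∃ P : Polynomial ℤ, IsBorwein P ∧ P.support.card = k ∧
        ¬ ∃ L : Polynomial ℤ, IsLittlewood L ∧ P ∣ L} 4 ∧
      (((X ^ 4 + X ^ 3 - X + 1 : Polynomial ℤ).support.card = 4) ∧
        ¬ ∃ L : Polynomial ℤ, IsLittlewood L ∧ (X ^ 4 + X ^ 3 - X + 1 : Polynomial ℤ) ∣ L) := by
  have hcard : (X ^ 4 + X ^ 3 - X + 1 : ℤ[X]).support.card = 4 := by
    rw [support_quadrinomial]
    rfl
  have hnot : ¬ ∃ L : ℤ[X], IsLittlewood L ∧ X ^ 4 + X ^ 3 - X + 1 ∣ L := by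
    rintro ⟨L, hL, hdvd⟩
    exact hL.not_quadrinomial_dvd hdvd
  refine ⟨⟨⟨by norm_num, _, isBorwein_quadrinomial, hcard, hnot⟩, ?_⟩, hcard, hnot⟩
  rintro k ⟨-, P, hP, rfl, hP'⟩
  by_contra! hlt
  exact hP' (hP.exists_isLittlewood_dvd (Nat.le_of_lt_succ hlt))
end

section
/- A Borwein polynomial of degree at most 9 with exactly four nonzero coefficients divides no Littlewood polynomial if and only if it equals ±Q(X) for one of the following 10 quadrinomials Q: X^4 + X^3 - X + 1; X^4 - X^3 + X + 1; X^6 - X^5 - X - 1; X^6 + X^5 + X - 1; X^8 - X^5 + X^3 + 1; X^8 + X^5 - X^3 + 1; X^8 + X^7 - X + 1; X^8 - X^7 + X + 1; X^8 + X^6 - X^2 + 1; X^8 - X^6 + X^2 + 1. In particular, there are exactly 20 such quadrinomials. -/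
open Polynomial

/-- The ten listed monic Borwein quadrinomials of degree at most 9 with no
Littlewood multiple. -/
noncomputable def badQuad : List (Polynomial ℤ) :=
  [X ^ 4 + X ^ 3 - X + 1,
   X ^ 4 - X ^ 3 + X + 1,
   X ^ 6 - X ^ 5 - X - 1,
   X ^ 6 + X ^ 5 + X - 1,
   X ^ 8 - X ^ 5 + X ^ 3 + 1,
   X ^ 8 + X ^ 5 - X ^ 3 + 1,
   X ^ 8 + X ^ 7 - X + 1,
   X ^ 8 - X ^ 7 + X + 1,
   X ^ 8 + X ^ 6 - X ^ 2 + 1,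
   X ^ 8 - X ^ 6 + X ^ 2 + 1]

/-!
Changing `P(X)` to `±P(±X)` does not affect whether `P` has a Littlewood multiple, and `P(X)` has
one if `P(X ^ 2)` does. This leaves quadrinomials with constant term `1`, of which only four have to
be shown to have no Littlewood multiple.

*Existence.* A multiple `P * Q = L` with `Q` having coefficients in `{-1, 0, 1}` and `L` Littlewood
is equivalent to the integer identity `P(10) * Q(10) = L(10)`, because all coefficients of
`P * Q - L` are at most `5` in absolute value. Such an identity can be found digit by digit.

*Nonexistence.* If `R * P` has a coefficient exceeding the sum of all the others in absolute value,
then every quotient `Q` of a Littlewood polynomial by `P` has bounded coefficients, and so has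
`A * Q` for each fixed `A`. As `P` has no zero on the unit circle, Graeffe's root squaring provides
such an `R`. Dividing power series leaves two choices for each coefficient of `Q`, and the bounds
cut the resulting tree down to a finite one, none of whose branches ends in a polynomial `Q`.
-/

/-- The property of dividing a Littlewood polynomial. -/
def HasLittlewoodMultiple (P : ℤ[X]) : Prop :=
  ∃ L, IsLittlewood L ∧ P ∣ L

theorem coeff_comp_neg_X {R : Type*} [CommRing R] (P : R[X]) (i : ℕ) :
    (P.comp (-X)).coeff i = P.coeff i * (-1) ^ i := by
  rw [← comp_C_mul_X_coeff, C_neg, C_1, neg_one_mul]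

theorem support_comp_neg_X {R : Type*} [CommRing R] (P : R[X]) :
    (P.comp (-X)).support = P.support := by
  ext i
  rcases neg_one_pow_eq_or R i with hs | hs <;> simp [coeff_comp_neg_X, hs]

theorem card_support_C_add_X_mul {R : Type*} [Semiring R] [DecidableEq R] (a : R) (P : R[X]) :
    (C a + X * P).support.card = P.support.card + if a = 0 then 0 else 1 := by
  have support_eq : (C a + X * P).support =
      (if a = 0 then ∅ else {0}) ∪ P.support.map (addRightEmbedding 1) := by
    ext i
    cases i with
    | zero => by_cases ha : a = 0 <;> simp [ha]
    | succ i => by_cases ha : a = 0 <;> simp [ha, coeff_C_succ]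
  rw [support_eq, Finset.card_union_of_disjoint, Finset.card_map]
  · by_cases ha : a = 0 <;> simp [ha, add_comm]
  · by_cases ha : a = 0 <;> simp [ha]

theorem exists_natAbs_coeff_le (P : ℤ[X]) :
    ∃ n, ∀ i, (P.coeff i).natAbs ≤ (P.coeff n).natAbs := by
  obtain ⟨n, -, hn⟩ := (Finset.range (P.natDegree + 1)).exists_max_image
    (fun i => (P.coeff i).natAbs) ⟨0, by simp⟩
  refine ⟨n, fun i => ?_⟩
  rcases le_or_gt i P.natDegree with hi | hi
  · exact hn i (Finset.mem_range_succ_iff.mpr hi)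
  · simp [coeff_eq_zero_of_natDegree_lt hi]

theorem eq_zero_of_eval_eq_zero_of_natAbs_coeff_lt {P : ℤ[X]} {b : ℕ}
    (hcoeff : ∀ i, (P.coeff i).natAbs < b) (heval : P.eval (b : ℤ) = 0) : P = 0 := by
  have coeff_zero_of_eval {P : ℤ[X]} (hcoeff : ∀ i, (P.coeff i).natAbs < b)
      (heval : P.eval (b : ℤ) = 0) : P.coeff 0 = 0 := by
    have hdvd : (b : ℤ) ∣ P.coeff 0 := by
      simpa [heval, coeff_zero_eq_eval_zero] using sub_dvd_eval_sub (b : ℤ) 0 P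
    exact Int.eq_zero_of_dvd_of_natAbs_lt_natAbs hdvd (by simpa using hcoeff 0)
  ext i
  induction i generalizing P with
  | zero => exact coeff_zero_of_eval hcoeff heval
  | succ i ih =>
    have hdivX : P.divX.eval (b : ℤ) * b = 0 := by
      simpa [coeff_zero_of_eval hcoeff heval, heval] using
        congrArg (eval (b : ℤ)) (divX_mul_X_add P)
    rw [← coeff_divX]
    refine ih (fun i => by simpa only [coeff_divX] using hcoeff (i + 1)) ?_
    exact (mul_eq_zero.mp hdivX).resolve_right (by exact_mod_cast (pos_of_gt (hcoeff 0)).ne')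

theorem IsLittlewood.coeff_eq_or_eq {L : ℤ[X]} (hL : IsLittlewood L) {i : ℕ}
    (hi : i ≤ L.natDegree) : L.coeff i = -1 ∨ L.coeff i = 1 :=
  hL i hi

theorem IsLittlewood.ne_zero {L : ℤ[X]} (hL : IsLittlewood L) : L ≠ 0 := by
  rintro rfl
  simpa using hL.coeff_eq_or_eq le_rfl

theorem IsLittlewood.natAbs_coeff_le_one {L : ℤ[X]} (hL : IsLittlewood L) (i : ℕ) :
    (L.coeff i).natAbs ≤ 1 := by
  by_cases hi : i ≤ L.natDegree
  · rcases hL.coeff_eq_or_eq hi with h | h <;> simp [h]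
  · simp [coeff_eq_zero_of_natDegree_lt (not_le.mp hi)]

theorem IsLittlewood.neg {L : ℤ[X]} (hL : IsLittlewood L) : IsLittlewood (-L) := by
  intro i hi
  rw [natDegree_neg] at hi
  rcases hL.coeff_eq_or_eq hi with h | h <;> simp [h]

theorem IsLittlewood.comp_neg_X {L : ℤ[X]} (hL : IsLittlewood L) :
    IsLittlewood (L.comp (-X)) := by
  intro i hi
  replace hi : i ≤ L.natDegree := by simpa [natDegree_comp] using hi
  rw [coeff_comp_neg_X]
  rcases neg_one_pow_eq_or ℤ i with hs | hs <;>
    rcases hL.coeff_eq_or_eq hi with h | h <;> simp [hs, h]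

theorem IsLittlewood.contract {L : ℤ[X]} (hL : IsLittlewood L) {k : ℕ} (hk : k ≠ 0) :
    IsLittlewood (L.contract k) := by
  intro i hi
  rw [coeff_contract hk]
  refine hL _ ?_
  by_cases h0 : L.contract k = 0
  · simp_all
  calc i * k ≤ (L.contract k).natDegree * k := by gcongr
    _ ≤ L.natDegree := by
      apply le_natDegree_of_ne_zero
      rw [← coeff_contract hk]
      exact leadingCoeff_ne_zero.mpr h0

theorem hasLittlewoodMultiple_neg {P : ℤ[X]} :
    HasLittlewoodMultiple (-P) ↔ HasLittlewoodMultiple P := by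
  simp only [HasLittlewoodMultiple, neg_dvd]

theorem HasLittlewoodMultiple.comp_neg_X {P : ℤ[X]} (hP : HasLittlewoodMultiple P) :
    HasLittlewoodMultiple (P.comp (-X)) := by
  obtain ⟨L, hL, Q, rfl⟩ := hP
  exact ⟨_, hL.comp_neg_X, Q.comp (-X), mul_comp _ _ _⟩

theorem hasLittlewoodMultiple_comp_neg_X {P : ℤ[X]} :
    HasLittlewoodMultiple (P.comp (-X)) ↔ HasLittlewoodMultiple P := by
  refine ⟨fun h => ?_, HasLittlewoodMultiple.comp_neg_X⟩
  simpa only [comp_neg_X_comp_neg_X] using h.comp_neg_X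

theorem HasLittlewoodMultiple.of_expand {P : ℤ[X]} {k : ℕ} (hk : k ≠ 0)
    (hP : HasLittlewoodMultiple (expand ℤ k P)) : HasLittlewoodMultiple P := by
  obtain ⟨L, hL, Q, rfl⟩ := hP
  refine ⟨_, hL.contract hk, Q.contract k, ?_⟩
  rw [mul_comm, contract_mul_expand hk, mul_comm]

theorem IsBorwein.coeff_eq_or_eq {P : ℤ[X]} (hP : IsBorwein P) (i : ℕ) :
    P.coeff i = -1 ∨ P.coeff i = 0 ∨ P.coeff i = 1 :=
  hP.1 i

theorem IsBorwein.neg {P : ℤ[X]} (hP : IsBorwein P) : IsBorwein (-P) := by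
  refine ⟨fun i => ?_, by simpa using hP.2⟩
  rcases hP.coeff_eq_or_eq i with h | h | h <;> simp [h]

theorem IsBorwein.comp_neg_X {P : ℤ[X]} (hP : IsBorwein P) : IsBorwein (P.comp (-X)) := by
  refine ⟨fun i => ?_, by simpa [coeff_comp_neg_X] using hP.2⟩
  rw [coeff_comp_neg_X]
  rcases neg_one_pow_eq_or ℤ i with hs | hs <;>
    rcases hP.coeff_eq_or_eq i with h | h | h <;> simp [hs, h]

/-! ### Polynomials as coefficient lists -/

/-- The integer polynomial with the given coefficients, constant term first. Lists of coefficients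
are the computable representation on which the searches below run. -/
noncomputable def ofCoeffs : List ℤ → ℤ[X]
  | [] => 0
  | a :: l => C a + X * ofCoeffs l

theorem coeff_ofCoeffs (l : List ℤ) (i : ℕ) : (ofCoeffs l).coeff i = l.getD i 0 := by
  induction l generalizing i with
  | nil => simp [ofCoeffs]
  | cons a l ih =>
    cases i with
    | zero => simp [ofCoeffs]
    | succ i =>
      rw [ofCoeffs, coeff_add, coeff_C_succ, zero_add, coeff_X_mul, ih, List.getD_cons_succ]

theorem coeff_ofCoeffs_induction {l : List ℤ} {p : ℤ → Prop} (h0 : p 0) (hl : ∀ a ∈ l, p a)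
    (i : ℕ) : p ((ofCoeffs l).coeff i) := by
  rw [coeff_ofCoeffs]
  rcases lt_or_ge i l.length with hi | hi
  · rw [List.getD_eq_getElem _ _ hi]
    exact hl _ (List.getElem_mem hi)
  · rwa [List.getD_eq_default _ _ hi]

theorem natDegree_ofCoeffs_le (l : List ℤ) : (ofCoeffs l).natDegree ≤ l.length - 1 := by
  refine natDegree_le_iff_coeff_eq_zero.mpr fun i hi => ?_
  rw [coeff_ofCoeffs, List.getD_eq_default _ _ (by lia)]

theorem natDegree_ofCoeffs_cons {a : ℤ} {t : List ℤ} (h : (a :: t).getD t.length 0 ≠ 0) :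
    (ofCoeffs (a :: t)).natDegree = t.length :=
  natDegree_eq_of_le_of_coeff_ne_zero (natDegree_ofCoeffs_le (a :: t)) (by rwa [coeff_ofCoeffs])

theorem card_support_ofCoeffs (l : List ℤ) : (ofCoeffs l).support.card = l.countP (· ≠ 0) := by
  induction l with
  | nil => simp [ofCoeffs]
  | cons a l ih => rw [ofCoeffs, card_support_C_add_X_mul, ih, List.countP_cons]; simp

theorem isLittlewood_ofCoeffs {l : List ℤ} (hne : l ≠ []) (hl : ∀ a ∈ l, a = -1 ∨ a = 1) :
    IsLittlewood (ofCoeffs l) := by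
  intro i hi
  have hlt : i < l.length := by
    have := natDegree_ofCoeffs_le l
    have := List.length_pos_iff.mpr hne
    lia
  rw [coeff_ofCoeffs, List.getD_eq_getElem _ _ hlt]
  exact hl _ (List.getElem_mem hlt)

theorem isBorwein_ofCoeffs {l : List ℤ} (hl : ∀ a ∈ l, a = -1 ∨ a = 0 ∨ a = 1)
    (h0 : l.getD 0 0 ≠ 0) : IsBorwein (ofCoeffs l) :=
  ⟨coeff_ofCoeffs_induction (by simp) hl, by rwa [coeff_ofCoeffs]⟩

/-- Horner evaluation at `x` of the polynomial with coefficient list `l`. -/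
def horner (x : ℤ) (l : List ℤ) : ℤ :=
  l.foldr (fun a s => a + x * s) 0

theorem eval_ofCoeffs (x : ℤ) (l : List ℤ) : (ofCoeffs l).eval x = horner x l := by
  induction l with
  | nil => simp [ofCoeffs, horner]
  | cons a l ih => simp [ofCoeffs, horner, ih]

theorem ofCoeffs_map_neg (l : List ℤ) : ofCoeffs (l.map Neg.neg) = -ofCoeffs l := by
  induction l with
  | nil => simp [ofCoeffs]
  | cons a l ih => simp only [List.map_cons, ofCoeffs, ih, C_neg]; ring

/-- The coefficient list of `P(-X)`. -/
def alternate : List ℤ → List ℤ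
  | [] => []
  | a :: p => a :: (alternate p).map Neg.neg

theorem ofCoeffs_alternate (l : List ℤ) : ofCoeffs (alternate l) = (ofCoeffs l).comp (-X) := by
  induction l with
  | nil => simp [alternate, ofCoeffs]
  | cons a l ih => simp [alternate, ofCoeffs, ofCoeffs_map_neg, ih]

/-- The coefficient list of `P(X ^ 2)`. -/
def spread : List ℤ → List ℤ
  | [] => []
  | [a] => [a]
  | a :: p => a :: 0 :: spread p

theorem ofCoeffs_spread : ∀ l : List ℤ, ofCoeffs (spread l) = expand ℤ 2 (ofCoeffs l)
  | [] => by simp [spread, ofCoeffs]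
  | [a] => by simp [spread, ofCoeffs]
  | a :: b :: l => by
    have ih := ofCoeffs_spread (b :: l)
    rw [spread, ofCoeffs, ofCoeffs, ih, ofCoeffs.eq_2 a, map_add, map_mul, expand_C, expand_X, C_0]
    · ring
    · simp

/-- The coefficient list of a sum. -/
def addCoeffs : List ℤ → List ℤ → List ℤ
  | a :: p, b :: q => (a + b) :: addCoeffs p q
  | [], q => q
  | p, [] => p

theorem ofCoeffs_addCoeffs (p q : List ℤ) :
    ofCoeffs (addCoeffs p q) = ofCoeffs p + ofCoeffs q := by
  induction p generalizing q with
  | nil => simp [addCoeffs, ofCoeffs]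
  | cons a p ih =>
    cases q with
    | nil => simp [addCoeffs, ofCoeffs]
    | cons b q => simp only [addCoeffs, ofCoeffs, ih, C_add]; ring

theorem ofCoeffs_map_mul (a : ℤ) (p : List ℤ) : ofCoeffs (p.map (a * ·)) = C a * ofCoeffs p := by
  induction p with
  | nil => simp [ofCoeffs]
  | cons b p ih => simp only [List.map_cons, ofCoeffs, ih, C_mul]; ring

/-- The coefficient list of a product. -/
def mulCoeffs : List ℤ → List ℤ → List ℤ
  | [], _ => []
  | a :: p, q => addCoeffs (q.map (a * ·)) (0 :: mulCoeffs p q)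

theorem ofCoeffs_mulCoeffs (p q : List ℤ) :
    ofCoeffs (mulCoeffs p q) = ofCoeffs p * ofCoeffs q := by
  induction p with
  | nil => simp [mulCoeffs, ofCoeffs]
  | cons a p ih =>
    simp only [mulCoeffs, ofCoeffs_addCoeffs, ofCoeffs_map_mul, ofCoeffs, ih, C_0]; ring

/-- The sum of the absolute values of a list of coefficients, i.e. the length of a polynomial. -/
def l1Norm (p : List ℤ) : ℕ :=
  (p.map Int.natAbs).sum

theorem l1Norm_cons (a : ℤ) (p : List ℤ) : l1Norm (a :: p) = a.natAbs + l1Norm p := by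
  simp [l1Norm]

theorem natAbs_coeff_ofCoeffs_mul_le {G : ℤ[X]} {M : ℕ} (hG : ∀ i, (G.coeff i).natAbs ≤ M)
    (p : List ℤ) (n : ℕ) : ((ofCoeffs p * G).coeff n).natAbs ≤ l1Norm p * M := by
  induction p generalizing n with
  | nil => simp [ofCoeffs]
  | cons a p ih =>
    have hX : ((X * (ofCoeffs p * G)).coeff n).natAbs ≤ l1Norm p * M := by
      cases n with
      | zero => simp
      | succ n => simpa only [coeff_X_mul] using ih n
    rw [ofCoeffs, add_mul, mul_assoc, coeff_add, coeff_C_mul, l1Norm_cons, add_mul]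
    calc (a * G.coeff n + (X * (ofCoeffs p * G)).coeff n).natAbs
        ≤ a.natAbs * (G.coeff n).natAbs + ((X * (ofCoeffs p * G)).coeff n).natAbs := by
          rw [← Int.natAbs_mul]; exact Int.natAbs_add_le _ _
      _ ≤ a.natAbs * M + l1Norm p * M := by gcongr; exact hG n

/-! ### Littlewood multiples from decimal expansions -/

/-- Depth-first search, up to a given depth, for the coefficients of `Q` (in `{-1, 0, 1}`) and of
`L` (in `{-1, 1}`) with `c + (1 + 10 * T) * Q(10) = L(10)`. Their constant terms are `(1, 1)` or
`(-1, -1)`, `(0, 1)`, `(-1, 1)`, `(1, -1)`, `(0, -1)` if the last decimal digit of `c` is `0`, `1`,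
`2`, `8`, `9`, respectively; the new `c` is the carry to the next digit. -/
def carrySearch (T : ℤ) : ℕ → ℤ → Bool
  | 0, _ => false
  | k + 1, c =>
    match (c % 10).toNat with
    | 0 => c == 0 || carrySearch T k (c / 10 + T) || carrySearch T k (c / 10 - T)
    | 1 => carrySearch T k (c / 10)
    | 2 => carrySearch T k (c / 10 - T)
    | 8 => carrySearch T k (c / 10 + 1 + T)
    | 9 => carrySearch T k (c / 10 + 1)
    | _ => false

theorem exists_eval_eq_of_carrySearch {T : ℤ} {k : ℕ} {c : ℤ} (hs : carrySearch T k c = true) :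
    ∃ q l : List ℤ, (∀ a ∈ q, a.natAbs ≤ 1) ∧ (∀ a ∈ l, a = -1 ∨ a = 1) ∧
      c + (1 + 10 * T) * (ofCoeffs q).eval 10 = (ofCoeffs l).eval 10 := by
  induction k generalizing c with
  | zero => simp [carrySearch] at hs
  | succ k ih =>
    have cons_digit {c' : ℤ} (a e : ℤ) (hs : carrySearch T k c' = true) (ha : a.natAbs ≤ 1)
        (he : e = -1 ∨ e = 1) (hc : c + (1 + 10 * T) * a = e + 10 * c') :
        ∃ q l : List ℤ, (∀ a ∈ q, a.natAbs ≤ 1) ∧ (∀ a ∈ l, a = -1 ∨ a = 1) ∧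
          c + (1 + 10 * T) * (ofCoeffs q).eval 10 = (ofCoeffs l).eval 10 := by
      obtain ⟨q, l, hq, hl, h⟩ := ih hs
      refine ⟨a :: q, e :: l, List.forall_mem_cons.mpr ⟨ha, hq⟩,
        List.forall_mem_cons.mpr ⟨he, hl⟩, ?_⟩
      simp only [ofCoeffs, eval_add, eval_mul, eval_C, eval_X]
      linear_combination hc + 10 * h
    rw [carrySearch] at hs
    split at hs
    · rw [Bool.or_eq_true, Bool.or_eq_true, beq_iff_eq] at hs
      rcases hs with (rfl | hs) | hs
      · exact ⟨[], [], by simp, by simp, by simp [ofCoeffs]⟩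
      · exact cons_digit 1 1 hs (by decide) (by decide) (by lia)
      · exact cons_digit (-1) (-1) hs (by decide) (by decide) (by lia)
    · exact cons_digit 0 1 hs (by decide) (by decide) (by lia)
    · exact cons_digit (-1) 1 hs (by decide) (by decide) (by lia)
    · exact cons_digit 1 (-1) hs (by decide) (by decide) (by lia)
    · exact cons_digit 0 (-1) hs (by decide) (by decide) (by lia)
    · contradiction

theorem hasLittlewoodMultiple_of_carrySearch {t : List ℤ} {k : ℕ} (ht : l1Norm (1 :: t) < 9)
    (hs : carrySearch (horner 10 t) k (horner 10 t) = true) :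
    HasLittlewoodMultiple (ofCoeffs (1 :: t)) := by
  obtain ⟨q, l, hq, hl, heval⟩ := exists_eval_eq_of_carrySearch hs
  have hL : IsLittlewood (ofCoeffs (1 :: l)) :=
    isLittlewood_ofCoeffs (by simp) (List.forall_mem_cons.mpr ⟨by simp, hl⟩)
  have hPQ := natAbs_coeff_ofCoeffs_mul_le (G := ofCoeffs (1 :: q)) (M := 1)
    (coeff_ofCoeffs_induction (by simp) (List.forall_mem_cons.mpr ⟨by simp, hq⟩)) (1 :: t)
  suffices ofCoeffs (1 :: t) * ofCoeffs (1 :: q) - ofCoeffs (1 :: l) = 0 from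
    ⟨_, hL, Dvd.intro _ (sub_eq_zero.mp this)⟩
  refine eq_zero_of_eval_eq_zero_of_natAbs_coeff_lt (b := 10) (fun i => ?_) ?_
  · have := Int.natAbs_sub_le ((ofCoeffs (1 :: t) * ofCoeffs (1 :: q)).coeff i)
      ((ofCoeffs (1 :: l)).coeff i)
    have := hPQ i
    have := hL.natAbs_coeff_le_one i
    rw [coeff_sub]
    lia
  · simp only [ofCoeffs, eval_sub, eval_mul, eval_add, eval_C, eval_X, eval_ofCoeffs 10 t,
      Nat.cast_ofNat]
    linear_combination 10 * heval

/-! ### Bounds on the quotient of a Littlewood polynomial -/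

theorem exists_le_natAbs_coeff_ofCoeffs_mul {G : ℤ[X]} {M : ℕ} (hG : ∀ i, (G.coeff i).natAbs ≤ M)
    {p : List ℤ} {c : ℤ} (hc : c ∈ p) (n : ℕ) : ∃ j,
      c.natAbs * ((G.coeff n).natAbs + M) ≤ ((ofCoeffs p * G).coeff j).natAbs + l1Norm p * M := by
  induction p with
  | nil => simp at hc
  | cons a p ih =>
    have expand_coeff (j : ℕ) : (ofCoeffs (a :: p) * G).coeff j =
        a * G.coeff j + (X * (ofCoeffs p * G)).coeff j := by
      rw [ofCoeffs, add_mul, mul_assoc, coeff_add, coeff_C_mul]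
    rcases List.mem_cons.mp hc with rfl | hc
    · refine ⟨n, ?_⟩
      have hX := natAbs_coeff_ofCoeffs_mul_le hG (0 :: p) n
      have hadd := Int.natAbs_sub_le ((ofCoeffs (c :: p) * G).coeff n)
        ((X * (ofCoeffs p * G)).coeff n)
      rw [expand_coeff, add_sub_cancel_right, Int.natAbs_mul, ← expand_coeff] at hadd
      simp only [ofCoeffs, C_0, zero_add, mul_assoc, l1Norm_cons, Int.natAbs_zero] at hX
      rw [l1Norm_cons]
      lia
    · obtain ⟨j, hj⟩ := ih hc
      refine ⟨j + 1, ?_⟩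
      have ha : a.natAbs * (G.coeff (j + 1)).natAbs ≤ a.natAbs * M := by gcongr; exact hG _
      have hadd := Int.natAbs_sub_le ((ofCoeffs (a :: p) * G).coeff (j + 1))
        (a * G.coeff (j + 1))
      rw [expand_coeff, add_sub_cancel_left, coeff_X_mul, Int.natAbs_mul, ← coeff_X_mul,
        ← expand_coeff, coeff_X_mul] at hadd
      rw [l1Norm_cons]
      lia

theorem natAbs_coeff_mul_le_of_dominant {p r a : List ℤ} {c : ℤ} {m : ℕ}
    (hc : c ∈ mulCoeffs r p)
    (hlt : l1Norm (mulCoeffs a r) + l1Norm (mulCoeffs r p) * (m + 1) < 2 * c.natAbs * (m + 1))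
    {Q : ℤ[X]} (hPQ : ∀ i, ((ofCoeffs p * Q).coeff i).natAbs ≤ 1) (n : ℕ) :
    ((ofCoeffs a * Q).coeff n).natAbs ≤ m := by
  obtain ⟨N, hN⟩ := exists_natAbs_coeff_le (ofCoeffs a * Q)
  obtain ⟨j, hj⟩ := exists_le_natAbs_coeff_ofCoeffs_mul hN hc N
  have hcomm : ofCoeffs (mulCoeffs r p) * (ofCoeffs a * Q) =
      ofCoeffs (mulCoeffs a r) * (ofCoeffs p * Q) := by
    rw [ofCoeffs_mulCoeffs, ofCoeffs_mulCoeffs]; ring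
  have hle := natAbs_coeff_ofCoeffs_mul_le hPQ (mulCoeffs a r) j
  rw [hcomm] at hj
  refine (hN n).trans (not_lt.mp fun hm => ?_)
  obtain ⟨x, hx⟩ := Nat.exists_eq_add_of_lt hm
  rw [hx] at hj
  have l1Norm_lt : l1Norm (mulCoeffs r p) < 2 * c.natAbs :=
    lt_of_mul_lt_mul_right (lt_of_le_of_lt (Nat.le_add_left _ _) hlt) (Nat.zero_le _)
  nlinarith [l1Norm_lt]

/-- The coefficients of even index; `P(X)` is recovered from `P(X ^ 2)`. -/
def evenPart : List ℤ → List ℤ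
  | [] => []
  | [a] => [a]
  | a :: _ :: p => a :: evenPart p

/-- A cofactor `R` for which `R * P` is the `k`-th Graeffe iterate of `P`, evaluated at `X ^ 2 ^ k`:
as `P(X) * P(-X) = P₁(X ^ 2)`, where the zeros of `P₁` are the squares of those of `P`, take
`R(X) = P(-X) * R₁(X ^ 2)`. If `P` has no zero on the unit circle, then for large `k` a single
coefficient of the iterate exceeds the sum of all the others. -/
def graeffeCofactor : ℕ → List ℤ → List ℤ
  | 0, _ => [1]
  | k + 1, p =>
    mulCoeffs (alternate p) (spread (graeffeCofactor k (evenPart (mulCoeffs (alternate p) p))))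

/-! ### Exhaustive search for quotients -/

/-- The sum of the products of corresponding entries. Skipping the zero entries of the first list
makes kernel evaluation faster. -/
def dot : List ℤ → List ℤ → ℤ
  | a :: p, b :: h => bif a == 0 then dot p h else a * b + dot p h
  | _, _ => 0

theorem dot_nil_right (p : List ℤ) : dot p [] = 0 := by cases p <;> rfl

theorem dot_cons_cons (a b : ℤ) (p h : List ℤ) : dot (a :: p) (b :: h) = a * b + dot p h := by
  rcases eq_or_ne a 0 with rfl | ha
  · simp [dot]
  · rw [dot, beq_false_of_ne ha, cond_false]

/-- The coefficients of `X ^ (n - 1), ..., X ^ 0`, in this order. -/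
def revCoeffs (Q : ℤ[X]) : ℕ → List ℤ
  | 0 => []
  | n + 1 => Q.coeff n :: revCoeffs Q n

theorem mem_take_revCoeffs {Q : ℤ[X]} {n d : ℕ} {x : ℤ} :
    x ∈ (revCoeffs Q n).take d ↔ ∃ i < n, n ≤ i + d ∧ Q.coeff i = x := by
  induction n generalizing d with
  | zero => simp [revCoeffs]
  | succ n ih =>
    cases d with
    | zero => simpa using fun i hi hi' => absurd hi (by lia)
    | succ d =>
      simp only [revCoeffs, List.take_succ_cons, List.mem_cons, ih]
      constructor
      · rintro (rfl | ⟨i, hi, hid, rfl⟩)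
        · exact ⟨n, by lia, by lia, rfl⟩
        · exact ⟨i, by lia, by lia, rfl⟩
      · rintro ⟨i, hi, hid, rfl⟩
        rcases Nat.lt_succ_iff_lt_or_eq.mp hi with hi | rfl
        · exact Or.inr ⟨i, hi, by lia, rfl⟩
        · exact Or.inl rfl

theorem coeff_X_mul_ofCoeffs_mul (p : List ℤ) (Q : ℤ[X]) (n : ℕ) :
    (X * (ofCoeffs p * Q)).coeff n = dot p (revCoeffs Q n) := by
  induction p generalizing n with
  | nil => simp [ofCoeffs, dot]
  | cons a p ih =>
    cases n with
    | zero => simp [revCoeffs, dot_nil_right]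
    | succ n =>
      rw [coeff_X_mul, ofCoeffs, add_mul, mul_assoc, coeff_add, coeff_C_mul, ih, revCoeffs,
        dot_cons_cons]

theorem coeff_ofCoeffs_mul (p : List ℤ) (Q : ℤ[X]) (n : ℕ) :
    (ofCoeffs p * Q).coeff n = dot p (revCoeffs Q (n + 1)) := by
  rw [← coeff_X_mul_ofCoeffs_mul, coeff_X_mul]

theorem coeff_ofCoeffs_one_cons_mul (t : List ℤ) (Q : ℤ[X]) (n : ℕ) :
    (ofCoeffs (1 :: t) * Q).coeff n = Q.coeff n + dot t (revCoeffs Q n) := by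
  rw [coeff_ofCoeffs_mul, revCoeffs, dot_cons_cons, one_mul]

/-- Exhaustive search, up to a given depth, for the quotients `Q` of Littlewood polynomials by
`P = 1 + X * T`, where `t` lists the coefficients of `T`. The state `h` consists of the coefficients
of `Q` known so far, the latest first, and the next one is `e - dot t h` if `e` is the corresponding
coefficient of `P * Q`. A branch is dropped once its state fails to satisfy `keep`; it counts as
successful if it reaches the given depth, or if `Q` can be continued by zeros because the last
`deg P` coefficients vanish. -/
def quotientSearch (t : List ℤ) (keep : List ℤ → Bool) : ℕ → List ℤ → Bool
  | 0, _ => true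
  | k + 1, h => [1, -1].any fun e =>
      let h' := (e - dot t h) :: h
      keep h' && ((h'.take t.length).all (· == 0) || quotientSearch t keep k h')

theorem quotientSearch_revCoeffs {t : List ℤ} {keep : List ℤ → Bool} {Q : ℤ[X]}
    (hdeg : (ofCoeffs (1 :: t)).natDegree = t.length) (hL : IsLittlewood (ofCoeffs (1 :: t) * Q))
    (hkeep : ∀ n, keep (revCoeffs Q (n + 1)) = true) {k n : ℕ}
    (hn : n ≤ (ofCoeffs (1 :: t) * Q).natDegree) :
    quotientSearch t keep k (revCoeffs Q n) = true := by
  induction k generalizing n with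
  | zero => rfl
  | succ k ih =>
    refine List.any_eq_true.mpr ⟨(ofCoeffs (1 :: t) * Q).coeff n, ?_, ?_⟩
    · simpa [or_comm] using hL n hn
    rw [coeff_ofCoeffs_one_cons_mul, add_sub_cancel_right, ← revCoeffs, Bool.and_eq_true,
      Bool.or_eq_true]
    refine ⟨hkeep n, (Nat.lt_or_eq_of_le hn).symm.imp (fun hn => ?_) fun hn => ih hn⟩
    simp only [List.all_eq_true, beq_iff_eq]
    intro x hx
    obtain ⟨i, -, hi, rfl⟩ := mem_take_revCoeffs.mp hx
    apply coeff_eq_zero_of_natDegree_lt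
    rw [natDegree_mul (left_ne_zero_of_mul hL.ne_zero) (right_ne_zero_of_mul hL.ne_zero)] at hn
    lia

theorem not_hasLittlewoodMultiple_of_quotientSearch {t : List ℤ} {keep : List ℤ → Bool} {k : ℕ}
    (ht : t ≠ []) (hdeg : (ofCoeffs (1 :: t)).natDegree = t.length)
    (hkeep : ∀ Q, IsLittlewood (ofCoeffs (1 :: t) * Q) → ∀ n, keep (revCoeffs Q (n + 1)) = true)
    (hs : quotientSearch t keep k [1] = false) :
    ¬ HasLittlewoodMultiple (ofCoeffs (1 :: t)) := by
  have coeff_zero_ne_one : ∀ Q, IsLittlewood (ofCoeffs (1 :: t) * Q) → Q.coeff 0 ≠ 1 := by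
    intro Q hL hQ
    have hn : 1 ≤ (ofCoeffs (1 :: t) * Q).natDegree := by
      rw [natDegree_mul (left_ne_zero_of_mul hL.ne_zero) (right_ne_zero_of_mul hL.ne_zero), hdeg]
      have := List.length_pos_iff.mpr ht
      lia
    have := quotientSearch_revCoeffs (k := k) hdeg hL (hkeep Q hL) hn
    simp [revCoeffs, hQ, hs] at this
  rintro ⟨_, hL, Q, rfl⟩
  have hQ : Q.coeff 0 = -1 ∨ Q.coeff 0 = 1 := by
    simpa [ofCoeffs] using hL 0 (Nat.zero_le _)
  rcases hQ with hQ | hQ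
  · exact coeff_zero_ne_one (-Q) (by simpa using hL.neg) (by simp [hQ])
  · exact coeff_zero_ne_one Q hL hQ

/-- For each pair `(A, m)` in `F`, the latest coefficient of `A * Q` that is determined by the state
`h` of `quotientSearch` is at most `m` in absolute value. -/
def withinBounds (F : List (List ℤ × ℕ)) (h : List ℤ) : Bool :=
  F.all fun f => (dot f.1 h).natAbs ≤ f.2

/-- Some coefficient of `R * P` is so large that all `Q` for which `P * Q` has coefficients in
`[-1, 1]` satisfy the bounds `F` of `withinBounds`, by `natAbs_coeff_mul_le_of_dominant`. -/
def certifiesBounds (p r : List ℤ) (F : List (List ℤ × ℕ)) : Bool :=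
  (mulCoeffs r p).any fun c => F.all fun f =>
    l1Norm (mulCoeffs f.1 r) + l1Norm (mulCoeffs r p) * (f.2 + 1) < 2 * c.natAbs * (f.2 + 1)

theorem withinBounds_revCoeffs {p r : List ℤ} {F : List (List ℤ × ℕ)}
    (hF : certifiesBounds p r F = true) {Q : ℤ[X]}
    (hPQ : ∀ i, ((ofCoeffs p * Q).coeff i).natAbs ≤ 1) (n : ℕ) :
    withinBounds F (revCoeffs Q (n + 1)) = true := by
  obtain ⟨c, hc, hF⟩ := List.any_eq_true.mp hF
  simp only [List.all_eq_true, decide_eq_true_eq] at hF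
  simp only [withinBounds, List.all_eq_true, decide_eq_true_eq, ← coeff_ofCoeffs_mul]
  exact fun f hf => natAbs_coeff_mul_le_of_dominant hc (hF f hf) hPQ n

theorem not_hasLittlewoodMultiple_of_certifiesBounds {t r : List ℤ} {F : List (List ℤ × ℕ)} {k : ℕ}
    (ht : t ≠ []) (hlast : (1 :: t).getD t.length 0 ≠ 0)
    (hF : certifiesBounds (1 :: t) r F = true)
    (hs : quotientSearch t (withinBounds F) k [1] = false) :
    ¬ HasLittlewoodMultiple (ofCoeffs (1 :: t)) :=
  not_hasLittlewoodMultiple_of_quotientSearch ht (natDegree_ofCoeffs_cons hlast)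
    (fun _ hL => withinBounds_revCoeffs hF hL.natAbs_coeff_le_one) hs

/-! ### Quadrinomials -/

/-- The coefficient lists of `badQuad`. -/
def badCoeffs : List (List ℤ) :=
  [[1, -1, 0, 1, 1],
   [1, 1, 0, -1, 1],
   [-1, -1, 0, 0, 0, -1, 1],
   [-1, 1, 0, 0, 0, 1, 1],
   [1, 0, 0, 1, 0, -1, 0, 0, 1],
   [1, 0, 0, -1, 0, 1, 0, 0, 1],
   [1, -1, 0, 0, 0, 0, 0, 1, 1],
   [1, 1, 0, 0, 0, 0, 0, -1, 1],
   [1, 0, -1, 0, 0, 0, 1, 0, 1],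
   [1, 0, 1, 0, 0, 0, -1, 0, 1]]

theorem badQuad_eq_map_ofCoeffs : badQuad = badCoeffs.map ofCoeffs := by
  simp only [badQuad, badCoeffs, ofCoeffs, List.map_cons, List.map_nil, List.cons.injEq, C_neg,
    C_1, C_0]
  refine ⟨?_, ?_, ?_, ?_, ?_, ?_, ?_, ?_, ?_, ?_, trivial⟩ <;> ring

/-- The coefficient lists of `signedBadQuad`. -/
def signedBadCoeffs : List (List ℤ) :=
  badCoeffs ++ badCoeffs.map (List.map Neg.neg)

/-- The quadrinomials `±Q` with `Q` in `badQuad`. -/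
noncomputable def signedBadQuad : List ℤ[X] :=
  badQuad ++ badQuad.map Neg.neg

theorem signedBadQuad_eq_map_ofCoeffs : signedBadQuad = signedBadCoeffs.map ofCoeffs := by
  simp [signedBadQuad, signedBadCoeffs, badQuad_eq_map_ofCoeffs, Function.comp_def,
    ofCoeffs_map_neg]

theorem ofCoeffs_mem_signedBadQuad {l : List ℤ} (hl : l ∈ signedBadCoeffs) :
    ofCoeffs l ∈ signedBadQuad := by
  rw [signedBadQuad_eq_map_ofCoeffs]
  exact List.mem_map_of_mem hl

theorem mem_signedBadQuad {P : ℤ[X]} :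
    P ∈ signedBadQuad ↔ ∃ Q ∈ badQuad, P = Q ∨ P = -Q := by
  simp only [signedBadQuad, List.mem_append, List.mem_map, and_or_left, exists_or,
    exists_eq_right', eq_comm]

theorem neg_mem_signedBadQuad {P : ℤ[X]} (hP : P ∈ signedBadQuad) : -P ∈ signedBadQuad := by
  obtain ⟨Q, hQ, rfl | rfl⟩ := mem_signedBadQuad.mp hP
  · exact mem_signedBadQuad.mpr ⟨P, hQ, Or.inr rfl⟩
  · exact mem_signedBadQuad.mpr ⟨Q, hQ, Or.inl (neg_neg Q)⟩

theorem comp_neg_X_mem_signedBadQuad {P : ℤ[X]} (hP : P ∈ signedBadQuad) :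
    P.comp (-X) ∈ signedBadQuad := by
  have alternate_mem : ∀ l ∈ signedBadCoeffs, alternate l ∈ signedBadCoeffs := by decide
  rw [signedBadQuad_eq_map_ofCoeffs] at hP
  obtain ⟨l, hl, rfl⟩ := List.mem_map.mp hP
  rw [← ofCoeffs_alternate]
  exact ofCoeffs_mem_signedBadQuad (alternate_mem l hl)

theorem nodup_signedBadQuad : signedBadQuad.Nodup := by
  have nodup_values : (signedBadCoeffs.map (horner 3)).Nodup := by decide
  refine List.Nodup.of_map (eval 3) ?_
  simpa only [signedBadQuad_eq_map_ofCoeffs, List.map_map, Function.comp_def, eval_ofCoeffs]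

theorem isBorwein_and_natDegree_le_and_card_support {P : ℤ[X]} (hP : P ∈ signedBadQuad) :
    IsBorwein P ∧ P.natDegree ≤ 9 ∧ P.support.card = 4 := by
  have coeffs_spec : ∀ l ∈ signedBadCoeffs, (∀ a ∈ l, a = -1 ∨ a = 0 ∨ a = 1) ∧
      l.getD 0 0 ≠ 0 ∧ l.length ≤ 10 ∧ l.countP (· ≠ 0) = 4 := by decide +kernel
  rw [signedBadQuad_eq_map_ofCoeffs] at hP
  obtain ⟨l, hl, rfl⟩ := List.mem_map.mp hP
  obtain ⟨hcoeff, h0, hlen, hcard⟩ := coeffs_spec l hl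
  refine ⟨isBorwein_ofCoeffs hcoeff h0, ?_, by rw [card_support_ofCoeffs, hcard]⟩
  exact (natDegree_ofCoeffs_le l).trans (by lia)

/-- The lists of at most `n` entries in `{-1, 0, 1}`, exactly `m` of them nonzero, that do not end
in `0`. -/
def ternaryLists : ℕ → ℕ → List (List ℤ)
  | _, 0 => [[]]
  | 0, _ + 1 => []
  | n + 1, m + 1 => (ternaryLists n (m + 1)).map (0 :: ·) ++
      (ternaryLists n m).map (1 :: ·) ++ (ternaryLists n m).map (-1 :: ·)

theorem exists_mem_ternaryLists {n m : ℕ} {P : ℤ[X]} (hP : ∀ i, P.coeff i ∈ ({-1, 0, 1} : Set ℤ))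
    (hdeg : ∀ i, n ≤ i → P.coeff i = 0) (hcard : P.support.card = m) :
    ∃ l ∈ ternaryLists n m, ofCoeffs l = P := by
  induction n generalizing m P with
  | zero =>
    obtain rfl : P = 0 := by ext i; simpa using hdeg i i.zero_le
    obtain rfl : m = 0 := by simpa using hcard.symm
    exact ⟨[], by simp [ternaryLists], rfl⟩
  | succ n ih =>
    cases m with
    | zero => exact ⟨[], by simp [ternaryLists], (card_support_eq_zero.mp hcard).symm⟩
    | succ m =>
      have hP_eq : C (P.coeff 0) + X * P.divX = P := by rw [add_comm, X_mul_divX_add]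
      have mem_tail {k : ℕ} (hk : P.divX.support.card = k) :
          ∃ l ∈ ternaryLists n k, ofCoeffs l = P.divX :=
        ih (fun i => by simpa only [coeff_divX] using hP (i + 1))
          (fun i hi => by simpa only [coeff_divX] using hdeg (i + 1) (by lia)) hk
      rw [← hP_eq, card_support_C_add_X_mul] at hcard
      have h0 : P.coeff 0 = -1 ∨ P.coeff 0 = 0 ∨ P.coeff 0 = 1 := hP 0
      rcases h0 with h | h | h <;> rw [h] at hcard hP_eq <;>
        obtain ⟨l, hl, hlP⟩ := mem_tail (by simpa using hcard)
      · exact ⟨-1 :: l, by simp [ternaryLists, hl], by rw [ofCoeffs, hlP, hP_eq]⟩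
      · exact ⟨0 :: l, by simp [ternaryLists, hl], by rw [ofCoeffs, hlP, hP_eq]⟩
      · exact ⟨1 :: l, by simp [ternaryLists, hl], by rw [ofCoeffs, hlP, hP_eq]⟩

theorem mem_signedBadCoeffs_or_carrySearch : ∀ t ∈ ternaryLists 9 3,
    horner 2 (1 :: t) < horner (-2) (1 :: t) ∨ 1 :: t ∈ signedBadCoeffs ∨
      l1Norm (1 :: t) < 9 ∧ carrySearch (horner 10 t) 600 (horner 10 t) = true := by
  decide +kernel

theorem mem_signedBadQuad_of_eval_le {P : ℤ[X]} (hP : IsBorwein P) (hdeg : P.natDegree ≤ 9)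
    (hcard : P.support.card = 4) (h0 : P.coeff 0 = 1) (heval : P.eval (-2) ≤ P.eval 2)
    (hnot : ¬ HasLittlewoodMultiple P) : P ∈ signedBadQuad := by
  have hP_eq : C 1 + X * P.divX = P := by rw [add_comm, ← h0, X_mul_divX_add]
  rw [← hP_eq, card_support_C_add_X_mul] at hcard
  obtain ⟨t, ht, htP⟩ := exists_mem_ternaryLists (n := 9) (m := 3) (P := P.divX)
    (fun i => by simpa only [coeff_divX] using hP.1 (i + 1))
    (fun i hi => by rw [coeff_divX, coeff_eq_zero_of_natDegree_lt (by lia)])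
    (by simpa using hcard)
  obtain rfl : ofCoeffs (1 :: t) = P := by rw [ofCoeffs, htP, hP_eq]
  rw [eval_ofCoeffs, eval_ofCoeffs] at heval
  rcases mem_signedBadCoeffs_or_carrySearch t ht with h | h | ⟨hnorm, h⟩
  · exact absurd heval (not_le.mpr h)
  · exact ofCoeffs_mem_signedBadQuad h
  · exact absurd (hasLittlewoodMultiple_of_carrySearch hnorm h) hnot

theorem mem_signedBadQuad_of_coeff_zero {P : ℤ[X]} (hP : IsBorwein P) (hdeg : P.natDegree ≤ 9)
    (hcard : P.support.card = 4) (h0 : P.coeff 0 = 1) (hnot : ¬ HasLittlewoodMultiple P) :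
    P ∈ signedBadQuad := by
  rcases le_total (P.eval (-2)) (P.eval 2) with heval | heval
  · exact mem_signedBadQuad_of_eval_le hP hdeg hcard h0 heval hnot
  · rw [← comp_neg_X_comp_neg_X P]
    apply comp_neg_X_mem_signedBadQuad
    apply mem_signedBadQuad_of_eval_le hP.comp_neg_X
    · simpa [natDegree_comp] using hdeg
    · rwa [support_comp_neg_X]
    · simpa [coeff_comp_neg_X] using h0
    · simpa [eval_comp] using heval
    · rwa [hasLittlewoodMultiple_comp_neg_X]

theorem mem_signedBadQuad_of_not_hasLittlewoodMultiple {P : ℤ[X]} (hP : IsBorwein P)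
    (hdeg : P.natDegree ≤ 9) (hcard : P.support.card = 4) (hnot : ¬ HasLittlewoodMultiple P) :
    P ∈ signedBadQuad := by
  rcases hP.coeff_eq_or_eq 0 with h0 | h0 | h0
  · rw [← neg_neg P]
    refine neg_mem_signedBadQuad (mem_signedBadQuad_of_coeff_zero hP.neg ?_ ?_ ?_ ?_)
    · rwa [natDegree_neg]
    · rwa [support_neg]
    · simp [h0]
    · rwa [hasLittlewoodMultiple_neg]
  · exact absurd h0 hP.2
  · exact mem_signedBadQuad_of_coeff_zero hP hdeg hcard h0 hnot

-- The pairs in `F` here and in the next three proofs were found by computer search.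
theorem not_hasLittlewoodMultiple_quartic :
    ¬ HasLittlewoodMultiple (ofCoeffs [1, -1, 0, 1, 1]) :=
  not_hasLittlewoodMultiple_of_certifiesBounds (r := graeffeCofactor 7 [1, -1, 0, 1, 1])
    (F := [([1], 1)]) (k := 60) (by decide) (by decide) (by decide +kernel) (by decide +kernel)

theorem not_hasLittlewoodMultiple_sextic :
    ¬ HasLittlewoodMultiple (ofCoeffs [1, 1, 0, 0, 0, 1, -1]) :=
  not_hasLittlewoodMultiple_of_certifiesBounds (r := graeffeCofactor 7 [1, 1, 0, 0, 0, 1, -1])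
    (F := [([1], 3), ([1, -1, 1], 4)]) (k := 60)
    (by decide) (by decide) (by decide +kernel) (by decide +kernel)

theorem not_hasLittlewoodMultiple_octic_five_three :
    ¬ HasLittlewoodMultiple (ofCoeffs [1, 0, 0, 1, 0, -1, 0, 0, 1]) :=
  not_hasLittlewoodMultiple_of_certifiesBounds
    (r := graeffeCofactor 7 [1, 0, 0, 1, 0, -1, 0, 0, 1])
    (F := [([1], 3), ([1, 1, 0, -1, 0, 0, 1], 3), ([1, -1], 4)]) (k := 60)
    (by decide) (by decide) (by decide +kernel) (by decide +kernel)

theorem not_hasLittlewoodMultiple_octic_seven_one :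
    ¬ HasLittlewoodMultiple (ofCoeffs [1, -1, 0, 0, 0, 0, 0, 1, 1]) :=
  not_hasLittlewoodMultiple_of_certifiesBounds
    (r := graeffeCofactor 7 [1, -1, 0, 0, 0, 0, 0, 1, 1])
    (F := [([1, 1, 1], 5), ([1, 1, 0, -1, -1], 7)]) (k := 60)
    (by decide) (by decide) (by decide +kernel) (by decide +kernel)

theorem hasLittlewoodMultiple_ofCoeffs_map_neg {l : List ℤ} :
    HasLittlewoodMultiple (ofCoeffs (l.map Neg.neg)) ↔ HasLittlewoodMultiple (ofCoeffs l) := by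
  rw [ofCoeffs_map_neg, hasLittlewoodMultiple_neg]

theorem hasLittlewoodMultiple_ofCoeffs_alternate {l : List ℤ} :
    HasLittlewoodMultiple (ofCoeffs (alternate l)) ↔ HasLittlewoodMultiple (ofCoeffs l) := by
  rw [ofCoeffs_alternate, hasLittlewoodMultiple_comp_neg_X]

theorem HasLittlewoodMultiple.of_spread {l : List ℤ}
    (h : HasLittlewoodMultiple (ofCoeffs (spread l))) : HasLittlewoodMultiple (ofCoeffs l) := by
  rw [ofCoeffs_spread] at h
  exact h.of_expand two_ne_zero

theorem not_hasLittlewoodMultiple_of_mem_badCoeffs {l : List ℤ} (hl : l ∈ badCoeffs) :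
    ¬ HasLittlewoodMultiple (ofCoeffs l) := by
  have not_alternate {p : List ℤ} (hp : ¬ HasLittlewoodMultiple (ofCoeffs p)) :
      ¬ HasLittlewoodMultiple (ofCoeffs (alternate p)) := by
    rwa [hasLittlewoodMultiple_ofCoeffs_alternate]
  have not_map_neg {p : List ℤ} (hp : ¬ HasLittlewoodMultiple (ofCoeffs p)) :
      ¬ HasLittlewoodMultiple (ofCoeffs (p.map Neg.neg)) := by
    rwa [hasLittlewoodMultiple_ofCoeffs_map_neg]
  have not_spread {p : List ℤ} (hp : ¬ HasLittlewoodMultiple (ofCoeffs p)) :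
      ¬ HasLittlewoodMultiple (ofCoeffs (spread p)) :=
    fun h => hp h.of_spread
  simp only [badCoeffs, List.mem_cons, List.not_mem_nil, or_false] at hl
  rcases hl with rfl | rfl | rfl | rfl | rfl | rfl | rfl | rfl | rfl | rfl
  · exact not_hasLittlewoodMultiple_quartic
  · simpa [alternate] using not_alternate not_hasLittlewoodMultiple_quartic
  · simpa using not_map_neg not_hasLittlewoodMultiple_sextic
  · simpa [alternate] using not_map_neg (not_alternate not_hasLittlewoodMultiple_sextic)
  · exact not_hasLittlewoodMultiple_octic_five_three
  · simpa [alternate] using not_alternate not_hasLittlewoodMultiple_octic_five_three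
  · exact not_hasLittlewoodMultiple_octic_seven_one
  · simpa [alternate] using not_alternate not_hasLittlewoodMultiple_octic_seven_one
  · simpa [spread] using not_spread not_hasLittlewoodMultiple_quartic
  · simpa [alternate, spread] using not_spread (not_alternate not_hasLittlewoodMultiple_quartic)

theorem not_hasLittlewoodMultiple_of_mem_signedBadQuad {P : ℤ[X]} (hP : P ∈ signedBadQuad) :
    ¬ HasLittlewoodMultiple P := by
  obtain ⟨Q, hQ, hPQ⟩ := mem_signedBadQuad.mp hP
  rw [badQuad_eq_map_ofCoeffs] at hQ
  obtain ⟨l, hl, rfl⟩ := List.mem_map.mp hQ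
  rcases hPQ with rfl | rfl
  · exact not_hasLittlewoodMultiple_of_mem_badCoeffs hl
  · rw [hasLittlewoodMultiple_neg]
    exact not_hasLittlewoodMultiple_of_mem_badCoeffs hl

/-- A Borwein polynomial of degree at most 9 with exactly four nonzero
coefficients divides no Littlewood polynomial iff it equals `±Q` for one of the
ten listed quadrinomials `Q`; in particular there are exactly 20 such
quadrinomials. -/
theorem borwein_quadrinomial_no_littlewood :
    (∀ P : Polynomial ℤ, IsBorwein P → P.natDegree ≤ 9 → P.support.card = 4 →
      ((¬ ∃ L : Polynomial ℤ, IsLittlewood L ∧ P ∣ L) ↔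
        ∃ Q ∈ badQuad, P = Q ∨ P = -Q)) ∧
    {P : Polynomial ℤ | IsBorwein P ∧ P.natDegree ≤ 9 ∧ P.support.card = 4 ∧
      ¬ ∃ L : Polynomial ℤ, IsLittlewood L ∧ P ∣ L}.ncard = 20 := by
  have not_multiple_iff (P : ℤ[X]) (hP : IsBorwein P) (hdeg : P.natDegree ≤ 9)
      (hcard : P.support.card = 4) : ¬ HasLittlewoodMultiple P ↔ P ∈ signedBadQuad :=
    ⟨mem_signedBadQuad_of_not_hasLittlewoodMultiple hP hdeg hcard,
      not_hasLittlewoodMultiple_of_mem_signedBadQuad⟩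
  refine ⟨fun P hP hdeg hcard => (not_multiple_iff P hP hdeg hcard).trans mem_signedBadQuad, ?_⟩
  classical
  calc _ = (signedBadQuad.toFinset : Set ℤ[X]).ncard := by
        congr 1
        ext P
        rw [SetLike.mem_coe, List.mem_toFinset]
        refine ⟨fun ⟨hP, hdeg, hcard, h⟩ => (not_multiple_iff P hP hdeg hcard).mp h, fun h => ?_⟩
        obtain ⟨hP, hdeg, hcard⟩ := isBorwein_and_natDegree_le_and_card_support h
        exact ⟨hP, hdeg, hcard, not_hasLittlewoodMultiple_of_mem_signedBadQuad h⟩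
    _ = signedBadQuad.length := by
      rw [Set.ncard_coe_finset, List.toFinset_card_of_nodup nodup_signedBadQuad]
    _ = 20 := by simp [signedBadQuad, badQuad]
end
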